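/- Let A, B be m×n real matrices all of whose entries lie in [0,1], and let M' be an SDP2-feasible solution for the game (A,B) with upper-left (m+n)×(m+n) block M and last-column vectors x, y. Then ε(x,y) ≤ (3(m+n)/8) · (Tr(M) − x^T x − y^T y). -/

import Mathlib

open Matrix BigOperators

/-- Index type for the `(m+n+1)×(m+n+1)` SDP matrix: `m` row-player strategies,
`n` column-player strategies, plus one extra index for the last row/column. -/
abbrev SDPIdx (m n : ℕ) := (Fin m ⊕ Fin n) ⊕ Unit

variable {m n : ℕ}

/-- The vector `x` appearing in the last column of the SDP matrix. -/
def lastX (M : Matrix (SDPIdx m n) (SDPIdx m n) ℝ) (i : Fin m) : ℝ :=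
  M (Sum.inl (Sum.inl i)) (Sum.inr ())

/-- The vector `y` appearing in the last column of the SDP matrix. -/
def lastY (M : Matrix (SDPIdx m n) (SDPIdx m n) ℝ) (j : Fin n) : ℝ :=
  M (Sum.inl (Sum.inr j)) (Sum.inr ())

/-- The `m × m` block `X`. -/
def blkX (M : Matrix (SDPIdx m n) (SDPIdx m n) ℝ) (i i' : Fin m) : ℝ :=
  M (Sum.inl (Sum.inl i)) (Sum.inl (Sum.inl i'))

/-- The `n × n` block `Y`. -/
def blkY (M : Matrix (SDPIdx m n) (SDPIdx m n) ℝ) (j j' : Fin n) : ℝ :=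
  M (Sum.inl (Sum.inr j)) (Sum.inl (Sum.inr j'))

/-- The `m × n` block `P = Zᵀ`. -/
def blkP (M : Matrix (SDPIdx m n) (SDPIdx m n) ℝ) (i : Fin m) (j : Fin n) : ℝ :=
  M (Sum.inl (Sum.inl i)) (Sum.inl (Sum.inr j))

/-- The `n × m` block `Z`. -/
def blkZ (M : Matrix (SDPIdx m n) (SDPIdx m n) ℝ) (j : Fin n) (i : Fin m) : ℝ :=
  M (Sum.inl (Sum.inr j)) (Sum.inl (Sum.inl i))

/-- The upper-left `(m+n)×(m+n)` block `M = [[X, P],[Z, Y]]` of the SDP matrix. -/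
def upperBlock (M : Matrix (SDPIdx m n) (SDPIdx m n) ℝ) :
    Matrix (Fin m ⊕ Fin n) (Fin m ⊕ Fin n) ℝ :=
  Matrix.of fun a b => M (Sum.inl a) (Sum.inl b)

/-- Membership in the standard simplex `Δ_k`. -/
def InSimplex {k : ℕ} (x : Fin k → ℝ) : Prop :=
  (∀ i, 0 ≤ x i) ∧ ∑ i, x i = 1

/-- `(x,y)` is a Nash equilibrium of the bimatrix game `(A,B)`:
`x ∈ Δ_m`, `y ∈ Δ_n`, `xᵀAy ≥ (Ay)_i` for all `i`, and `xᵀBy ≥ (Bᵀx)_j` for all `j`. -/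
def IsNash (A B : Matrix (Fin m) (Fin n) ℝ) (x : Fin m → ℝ) (y : Fin n → ℝ) : Prop :=
  InSimplex x ∧ InSimplex y ∧
  (∀ i : Fin m, ∑ i', ∑ j, x i' * A i' j * y j ≥ ∑ j, A i j * y j) ∧
  (∀ j : Fin n, ∑ i, ∑ j', x i * B i j' * y j' ≥ ∑ i, B i j * x i)

/-- Feasibility for SDP1: `M'` is psd, entrywise nonnegative, has `1` in the corner,
`x` and `y` sum to one, and the relaxed Nash constraints
`Tr(AZ) ≥ (Ay)_i` and `Tr(BZ) ≥ (Bᵀx)_j` hold. -/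
def SDP1Feasible (A B : Matrix (Fin m) (Fin n) ℝ)
    (M : Matrix (SDPIdx m n) (SDPIdx m n) ℝ) : Prop :=
  M.PosSemidef ∧
  (∀ a b, 0 ≤ M a b) ∧
  M (Sum.inr ()) (Sum.inr ()) = 1 ∧
  (∑ i, lastX M i) = 1 ∧
  (∑ j, lastY M j) = 1 ∧
  (∀ i : Fin m, ∑ i', ∑ j, A i' j * blkZ M j i' ≥ ∑ j, A i j * lastY M j) ∧
  (∀ j : Fin n, ∑ i, ∑ j', B i j' * blkZ M j' i ≥ ∑ i, B i j * lastX M i)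

/-- Feasibility for SDP2: SDP1 feasibility together with the row constraints and the
correlated equilibrium constraints. -/
def SDP2Feasible (A B : Matrix (Fin m) (Fin n) ℝ)
    (M : Matrix (SDPIdx m n) (SDPIdx m n) ℝ) : Prop :=
  SDP1Feasible A B M ∧
  (∀ i : Fin m, ∑ j, blkX M i j = lastX M i) ∧
  (∀ i : Fin m, ∑ j, blkP M i j = lastX M i) ∧
  (∀ j : Fin n, ∑ j', blkY M j j' = lastY M j) ∧
  (∀ j : Fin n, ∑ i, blkZ M j i = lastY M j) ∧
  (∀ i k : Fin m, ∑ j, A i j * blkP M i j ≥ ∑ j, A k j * blkP M i j) ∧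
  (∀ j k : Fin n, ∑ i, B i j * blkP M i j ≥ ∑ i, B i k * blkP M i j)

/-- `ε_A(x,y) = max_i (Ay)_i − xᵀAy`. -/
noncomputable def epsA (A : Matrix (Fin m) (Fin n) ℝ) (x : Fin m → ℝ) (y : Fin n → ℝ) : ℝ :=
  (⨆ i : Fin m, ∑ j, A i j * y j) - ∑ i, ∑ j, x i * A i j * y j

/-- `ε_B(x,y) = max_j (Bᵀx)_j − xᵀBy`. -/
noncomputable def epsB (B : Matrix (Fin m) (Fin n) ℝ) (x : Fin m → ℝ) (y : Fin n → ℝ) : ℝ :=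
  (⨆ j : Fin n, ∑ i, B i j * x i) - ∑ i, ∑ j, x i * B i j * y j

/-- `ε(x,y) = max{ε_A(x,y), ε_B(x,y)}`. -/
noncomputable def epsNE (A B : Matrix (Fin m) (Fin n) ℝ) (x : Fin m → ℝ) (y : Fin n → ℝ) : ℝ :=
  max (epsA A x y) (epsB B x y)

/-- The `m × n` all-ones matrix `J`. -/
def allOnesM (m n : ℕ) : Matrix (Fin m) (Fin n) ℝ :=
  Matrix.of fun _ _ => (1 : ℝ)

theorem psd_three {ι : Type*} (M : Matrix ι ι ℝ) (h : M.PosSemidef) (a b c : ι)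
    (hc : M c c = 1) (s : ℝ) :
    0 ≤ M a a + s ^ 2 * M b b + 2 * s * M a b - (M a c + s * M b c) ^ 2 := by
  have hs : ∀ i j, M i j = M j i := fun i j => by
    have := h.isHermitian.apply i j
    simpa using this.symm
  have h1 := (h.submatrix ![a, b, c]).dotProduct_mulVec_nonneg ![1, s, -(M a c + s * M b c)]
  simp only [dotProduct, mulVec, Fin.sum_univ_three, submatrix_apply, Pi.star_apply, star_trivial,
    Matrix.cons_val_zero, Matrix.cons_val_one, Matrix.cons_val] at h1
  rw [hs c a, hs c b, hs b a, hc] at h1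
  nlinarith [h1]

theorem gap_bound (C : Matrix (Fin m) (Fin n) ℝ) (hC : ∀ i j, C i j ∈ Set.Icc (0 : ℝ) 1)
    (E : Fin m → Fin n → ℝ) (a : Fin m → ℝ) (b : Fin n → ℝ) (ha : ∀ i, 0 ≤ a i)
    (hb : ∀ j, 0 ≤ b j) (h1 : ∀ i j, 0 ≤ a i + b j + 2 * E i j)
    (h2 : ∀ i j, 0 ≤ a i + b j - 2 * E i j) (h0 : ∑ i, ∑ j, E i j = 0) :
    ∑ i, ∑ j, C i j * E i j ≤ (3 * (m + n : ℝ) / 8) * (∑ i, a i + ∑ j, b j) := by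
  have key : ∑ i, ∑ j, (C i j * E i j - 1 / 2 * E i j) ≤ ∑ i, ∑ j, (1 / 4 * a i + 1 / 4 * b j) := by
    refine Finset.sum_le_sum fun i _ => Finset.sum_le_sum fun j _ => ?_
    obtain ⟨c0, c1⟩ := hC i j
    nlinarith [mul_nonneg c0 (h2 i j), mul_nonneg (sub_nonneg.2 c1) (h1 i j)]
  simp only [Finset.sum_sub_distrib, Finset.sum_add_distrib, ← Finset.mul_sum, h0,
    Finset.sum_const, Finset.card_univ, Fintype.card_fin, nsmul_eq_mul] at key
  have sa : 0 ≤ ∑ i, a i := Finset.sum_nonneg fun i _ => ha i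
  have sb : 0 ≤ ∑ j, b j := Finset.sum_nonneg fun i _ => hb i
  have hm : (0 : ℝ) ≤ m := Nat.cast_nonneg m
  have hn : (0 : ℝ) ≤ n := Nat.cast_nonneg n
  nlinarith [mul_nonneg hm sa, mul_nonneg hm sb, mul_nonneg hn sa, mul_nonneg hn sb]

theorem sdp_gap (A B C : Matrix (Fin m) (Fin n) ℝ) (hC : ∀ i j, C i j ∈ Set.Icc (0 : ℝ) 1)
    (M : Matrix (SDPIdx m n) (SDPIdx m n) ℝ) (hfeas : SDP2Feasible A B M) :
    ∑ i, ∑ j, C i j * blkZ M j i - ∑ i, ∑ j, lastX M i * C i j * lastY M j ≤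
      (3 * (m + n : ℝ) / 8) *
        ((upperBlock M).trace - (∑ i, (lastX M i) ^ 2) - ∑ j, (lastY M j) ^ 2) := by
  obtain ⟨⟨hpsd, -, hc, hx, hy, -, -⟩, -, hP, -, -, -, -⟩ := hfeas
  have hZ : ∀ i j, blkZ M j i = blkP M i j := fun i j => by
    have := hpsd.isHermitian.apply (Sum.inl (Sum.inr j)) (Sum.inl (Sum.inl i))
    simpa [blkZ, blkP] using this.symm
  have h := gap_bound C hC (fun i j => blkP M i j - lastX M i * lastY M j)
    (fun i => blkX M i i - lastX M i ^ 2) (fun j => blkY M j j - lastY M j ^ 2)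
    (fun i => by
      have := psd_three M hpsd (Sum.inl (Sum.inl i)) (Sum.inl (Sum.inl i)) _ hc 0
      simp only [blkX, lastX]; linarith)
    (fun i => by
      have := psd_three M hpsd (Sum.inl (Sum.inr i)) (Sum.inl (Sum.inr i)) _ hc 0
      simp only [blkY, lastY]; linarith)
    (fun i j => by
      have := psd_three M hpsd (Sum.inl (Sum.inl i)) (Sum.inl (Sum.inr j)) _ hc 1
      simp only [blkX, blkY, blkP, lastX, lastY]; linarith)
    (fun i j => by
      have := psd_three M hpsd (Sum.inl (Sum.inl i)) (Sum.inl (Sum.inr j)) _ hc (-1)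
      simp only [blkX, blkY, blkP, lastX, lastY]; linarith)
    (by simp only [Finset.sum_sub_distrib, hP, ← Finset.mul_sum, hy, mul_one, sub_self, Finset.sum_const_zero])
  have hL : ∑ i, ∑ j, C i j * blkZ M j i - ∑ i, ∑ j, lastX M i * C i j * lastY M j =
      ∑ i, ∑ j, C i j * (blkP M i j - lastX M i * lastY M j) := by
    rw [← Finset.sum_sub_distrib]
    refine Finset.sum_congr rfl fun i _ => ?_
    rw [← Finset.sum_sub_distrib]
    refine Finset.sum_congr rfl fun j _ => ?_
    rw [hZ]; ring
  have hR : (upperBlock M).trace = ∑ i, blkX M i i + ∑ j, blkY M j j := by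
    simp [Matrix.trace, upperBlock, blkX, blkY]
  rw [hL, hR]
  refine h.trans (le_of_eq ?_)
  simp only [Finset.sum_sub_distrib]
  ring

/-- `ε(x,y) ≤ (3(m+n)/8)·(Tr(M) − xᵀx − yᵀy)` for any SDP2-feasible solution
of a game with payoffs in `[0,1]`. -/
theorem stmt19 (hm : 0 < m) (hn : 0 < n) (A B : Matrix (Fin m) (Fin n) ℝ)
    (hA : ∀ i j, A i j ∈ Set.Icc (0 : ℝ) 1) (hB : ∀ i j, B i j ∈ Set.Icc (0 : ℝ) 1)
    (M : Matrix (SDPIdx m n) (SDPIdx m n) ℝ)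
    (hfeas : SDP2Feasible A B M) :
    epsNE A B (lastX M) (lastY M) ≤
      (3 * (m + n : ℝ) / 8) *
        ((upperBlock M).trace - (∑ i, (lastX M i) ^ 2) - ∑ j, (lastY M j) ^ 2) := by
  have : Nonempty (Fin m) := ⟨⟨0, hm⟩⟩
  have : Nonempty (Fin n) := ⟨⟨0, hn⟩⟩
  have h1 := sdp_gap A B A hA M hfeas
  have h2 := sdp_gap A B B hB M hfeas
  obtain ⟨⟨-, -, -, -, -, ha, hb⟩, -⟩ := hfeas
  refine max_le (le_trans ?_ h1) (le_trans ?_ h2)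
  · exact sub_le_sub_right (ciSup_le ha) _
  · exact sub_le_sub_right (ciSup_le hb) _
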